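/- Let F be a Ferrers diagram of semiperimeter n+1, T ∈ EWtab(F), and S = S(T) its supplementary tableau. A cell entry T_{jk} is a cornersupport in T if and only if there exist j' ∈ rows(F) and k' ∈ cols(F) with j' ≠ j and k' ≠ k such that: when T_{jk} = 0, the cells (j',k') and (j,k') belong to F with T_{j'k'} = 1 and T_{jk'} = 0, and S_{j'k} = 0; when T_{jk} = 1, the cells (j',k') and (j',k) belong to F with T_{j'k'} = 0 and T_{j'k} = 1, and S_{jk'} = 1. -/

import Mathlib

open Classical

/-- A Ferrers diagram of semiperimeter `n + 1`, encoded by the set of its row labels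
(labels `0, …, n` run along the south-east border; `0` labels the top row and the
last label `n` is a column label). -/
structure Ferrers (n : ℕ) where
  rows : Finset (Fin (n + 1))
  zero_mem : 0 ∈ rows
  last_not_mem : Fin.last n ∉ rows

namespace Ferrers

/-- `(i, j)` is a cell of the diagram: `i` is a row label, `j` a column label, `i < j`. -/
def Cell {n : ℕ} (F : Ferrers n) (i j : Fin (n + 1)) : Prop :=
  i ∈ F.rows ∧ j ∉ F.rows ∧ i < j

/-- Adjacency in the Ferrers graph `G(F)`. -/
def Adj {n : ℕ} (F : Ferrers n) (u v : Fin (n + 1)) : Prop :=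
  F.Cell u v ∨ F.Cell v u

/-- Degree of a vertex in `G(F)`. -/
noncomputable def deg {n : ℕ} (F : Ferrers n) (v : Fin (n + 1)) : ℕ :=
  {u | F.Adj v u}.ncard

/-- Toppling a single vertex.  The height at the sink `0` is kept equal to `c 0`
(grains sent to the sink vanish); toppling the sink sends one grain to each of
its neighbours. -/
noncomputable def topple {n : ℕ} (F : Ferrers n) (c : Fin (n + 1) → ℕ)
    (v : Fin (n + 1)) : Fin (n + 1) → ℕ :=
  fun u =>
    if u = 0 then c 0
    else if u = v then c v - F.deg v
    else if F.Adj v u then c u + 1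
    else c u

/-- Toppling the vertices of a list in order. -/
noncomputable def toppleList {n : ℕ} (F : Ferrers n) (c : Fin (n + 1) → ℕ)
    (l : List (Fin (n + 1))) : Fin (n + 1) → ℕ :=
  l.foldl F.topple c

/-- Simultaneous toppling of a set of vertices. -/
noncomputable def toppleSet {n : ℕ} (F : Ferrers n) (c : Fin (n + 1) → ℕ)
    (S : Set (Fin (n + 1))) : Fin (n + 1) → ℕ :=
  fun u =>
    if u = 0 then c 0
    else c u + {w ∈ S | F.Adj w u}.ncard - if u ∈ S then F.deg u else 0

/-- A configuration is stable if every non-sink vertex has fewer grains than its degree. -/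
def Stable {n : ℕ} (F : Ferrers n) (c : Fin (n + 1) → ℕ) : Prop :=
  ∀ v, v ≠ 0 → c v < F.deg v

/-- A Dhar (burning) ordering for `c`: an ordering `v₀ = 0, v₁, …, vₙ` of all the
vertices such that each `vᵢ` (`i ≥ 1`) is unstable after toppling `v₀, …, v_{i-1}`. -/
def DharSeq {n : ℕ} (F : Ferrers n) (c : Fin (n + 1) → ℕ) (l : List (Fin (n + 1))) : Prop :=
  l.length = n + 1 ∧ l.Nodup ∧ l.head? = some 0 ∧
    ∀ i, ∀ h : i < l.length, 1 ≤ i →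
      F.deg (l.get ⟨i, h⟩) ≤ F.toppleList c (l.take i) (l.get ⟨i, h⟩)

/-- Recurrent configurations (via Dhar's criterion).  The height at the sink is
normalised to `0`. -/
def Recurrent {n : ℕ} (F : Ferrers n) (c : Fin (n + 1) → ℕ) : Prop :=
  c 0 = 0 ∧ F.Stable c ∧ ∃ l, F.DharSeq c l

/-- Minimal recurrent configurations: recurrent with minimal total number of grains. -/
def RecMin {n : ℕ} (F : Ferrers n) (c : Fin (n + 1) → ℕ) : Prop :=
  F.Recurrent c ∧ ∀ c', F.Recurrent c' → (∑ v, c v) ≤ ∑ v, c' v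

/-- Canonical toppling: block `0` is `{0}` (the sink); from then on, blocks with odd
index are the sets of currently unstable column vertices and blocks with even index
the sets of currently unstable row vertices.  The first component is the configuration
just before toppling the block recorded in the second component. -/
noncomputable def canonAux {n : ℕ} (F : Ferrers n) (c : Fin (n + 1) → ℕ) :
    ℕ → ((Fin (n + 1) → ℕ) × Set (Fin (n + 1)))
  | 0 => (c, {0})
  | k + 1 =>
    let c' := F.toppleSet (canonAux F c k).1 (canonAux F c k).2
    (c', {v | v ≠ 0 ∧ (if k % 2 = 0 then v ∉ F.rows else v ∈ F.rows) ∧ F.deg v ≤ c' v})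

/-- The `k`-th block of the canonical toppling of `c`:
`canonTop F c 0 = U⁰ = {0}`, `canonTop F c (2i-1) = Vⁱ`, `canonTop F c (2i) = Uⁱ`. -/
noncomputable def canonTop {n : ℕ} (F : Ferrers n) (c : Fin (n + 1) → ℕ) (k : ℕ) :
    Set (Fin (n + 1)) :=
  (F.canonAux c k).2

/-- The configuration just before toppling the `k`-th block of the canonical toppling. -/
noncomputable def canonConfig {n : ℕ} (F : Ferrers n) (c : Fin (n + 1) → ℕ) (k : ℕ) :
    Fin (n + 1) → ℕ :=
  (F.canonAux c k).1

/-- The index of the block of the canonical toppling of `c` containing `v`. -/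
noncomputable def bIdx {n : ℕ} (F : Ferrers n) (c : Fin (n + 1) → ℕ) (v : Fin (n + 1)) : ℕ :=
  sInf {k | v ∈ F.canonTop c k}

/-- `T` is a EW-tableau on `F` (entries of non-cells are normalised to `false`):
the top row contains only `1`s, every other row contains a `0`, and there is no
rectangle with two diagonally opposite `0`s and two `1`s in the other corners. -/
def IsEW {n : ℕ} (F : Ferrers n) (T : Fin (n + 1) → Fin (n + 1) → Bool) : Prop :=
  (∀ i j, ¬F.Cell i j → T i j = false) ∧
  (∀ j, F.Cell 0 j → T 0 j = true) ∧
  (∀ i, i ∈ F.rows → i ≠ 0 → ∃ j, F.Cell i j ∧ T i j = false) ∧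
  (∀ i i' j j', F.Cell i j → F.Cell i j' → F.Cell i' j → F.Cell i' j' →
    T i j = T i' j' → T i j' = T i' j → T i j = T i j')

/-- The configuration associated to a tableau: row vertices count the `1`s in their
row, column vertices count the `0`s in their column (the sink is normalised to `0`). -/
noncomputable def phiTC {n : ℕ} (F : Ferrers n) (T : Fin (n + 1) → Fin (n + 1) → Bool) :
    Fin (n + 1) → ℕ :=
  fun v =>
    if v = 0 then 0
    else if v ∈ F.rows then {j | F.Cell v j ∧ T v j = true}.ncard
    else {i | F.Cell i v ∧ T i v = false}.ncard

/-- The tableau associated to a (minimal recurrent) configuration: a cell `(i, j)`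
gets a `1` exactly when `i` lies in an earlier block than `j` in the canonical
toppling of `c`. -/
noncomputable def phiCT {n : ℕ} (F : Ferrers n) (c : Fin (n + 1) → ℕ) :
    Fin (n + 1) → Fin (n + 1) → Bool :=
  fun i j => if F.Cell i j ∧ F.bIdx c i < F.bIdx c j then true else false

/-- The supplementary tableau of `T`: `S i j = 1` exactly when the row vertex `i`
lies in an earlier block than the column vertex `j` in `CanonTop (φ_TC T)`. -/
noncomputable def suppS {n : ℕ} (F : Ferrers n) (T : Fin (n + 1) → Fin (n + 1) → Bool)
    (i j : Fin (n + 1)) : Bool :=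
  if F.bIdx (F.phiTC T) i < F.bIdx (F.phiTC T) j then true else false

/-- The entry of `T` in cell `(j, k)` is a cornersupport entry. -/
def Cornersupport {n : ℕ} (F : Ferrers n) (T : Fin (n + 1) → Fin (n + 1) → Bool)
    (j k : Fin (n + 1)) : Prop :=
  ∃ j' k', j' ∈ F.rows ∧ k' ∉ F.rows ∧ j' ≠ j ∧ k' ≠ k ∧
    F.suppS T j' k' = !(T j k) ∧ F.suppS T j' k = T j k ∧ F.suppS T j k' = T j k

/-- `ν_v(T)`: the number of non-cornersupport `0`s in row `v` (if `v` is a row label),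
resp. non-cornersupport `1`s in column `v` (if `v` is a column label). -/
noncomputable def nu {n : ℕ} (F : Ferrers n) (T : Fin (n + 1) → Fin (n + 1) → Bool)
    (v : Fin (n + 1)) : ℕ :=
  if v ∈ F.rows then {k | F.Cell v k ∧ T v k = false ∧ ¬F.Cornersupport T v k}.ncard
  else {i | F.Cell i v ∧ T i v = true ∧ ¬F.Cornersupport T i v}.ncard

/-- `μ_v(c)`: if `v ∈ Uⁱ`, the number of `k ∈ Vⁱ` with `k > v`; if `v ∈ Vⁱ`,
the number of `k ∈ U^{i-1}` with `k < v`.  In both cases the relevant block is the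
one immediately preceding the block of `v`. -/
noncomputable def mu {n : ℕ} (F : Ferrers n) (c : Fin (n + 1) → ℕ) (v : Fin (n + 1)) : ℕ :=
  if v ∈ F.rows then {k | v < k ∧ k ∈ F.canonTop c (F.bIdx c v - 1)}.ncard
  else {k | k < v ∧ k ∈ F.canonTop c (F.bIdx c v - 1)}.ncard

/-- The minimal recurrent configuration with the same canonical toppling as `c`:
if `j ∈ Uⁱ` then `minrec c j = |{ℓ ∈ Vᵏ : j < ℓ, k > i}|`, and if `j ∈ Vⁱ` then
`minrec c j = |{ℓ ∈ Uᵏ : ℓ < j, k ≥ i}|` (blocks `Vᵏ` sit at odd index `2k - 1`,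
blocks `Uᵏ` at even index `2k`). -/
noncomputable def minrecFun {n : ℕ} (F : Ferrers n) (c : Fin (n + 1) → ℕ) :
    Fin (n + 1) → ℕ :=
  fun j =>
    if j = 0 then 0
    else if j ∈ F.rows then
      {l | j < l ∧ ∃ k, F.bIdx c j < 2 * k + 1 ∧ l ∈ F.canonTop c (2 * k + 1)}.ncard
    else
      {l | l < j ∧ ∃ k, F.bIdx c j < 2 * k ∧ l ∈ F.canonTop c (2 * k)}.ncard

/-- The number of edges of `G(F)` (equivalently, the number of cells of `F`). -/
noncomputable def edgeCount {n : ℕ} (F : Ferrers n) : ℕ :=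
  {p : Fin (n + 1) × Fin (n + 1) | F.Cell p.1 p.2}.ncard

end Ferrers

namespace Ferrers

variable {n : ℕ} {F : Ferrers n} {T : Fin (n + 1) → Fin (n + 1) → Bool}

/-- The orientation of `G(F)` induced by a tableau: a cell `(i, j)` is oriented from its row to
its column if its entry is `1`, and from its column to its row otherwise. -/
def Edge (F : Ferrers n) (T : Fin (n + 1) → Fin (n + 1) → Bool) (u v : Fin (n + 1)) : Prop :=
  (F.Cell u v ∧ T u v = true) ∨ (F.Cell v u ∧ T v u = false)

lemma Edge.mem_rows_iff {u v : Fin (n + 1)} (h : F.Edge T u v) : u ∈ F.rows ↔ v ∉ F.rows := by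
  rcases h with ⟨⟨h1, h2, -⟩, -⟩ | ⟨⟨h1, h2, -⟩, -⟩ <;> simp [h1, h2]

lemma adj_iff_edge {u v : Fin (n + 1)} : F.Adj u v ↔ F.Edge T u v ∨ F.Edge T v u := by
  unfold Adj Edge
  cases T u v <;> cases T v u <;> simp <;> tauto

lemma Edge.asymm {u v : Fin (n + 1)} (h : F.Edge T u v) : ¬F.Edge T v u := by
  rcases h with ⟨⟨h1, h2, h3⟩, h⟩ | ⟨⟨h1, h2, h3⟩, h⟩ <;> simp [Edge, Cell, h1, h2, h3, h]

lemma adj_comm {u v : Fin (n + 1)} : F.Adj u v ↔ F.Adj v u := Or.comm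

lemma IsEW.not_edge_zero (hT : F.IsEW T) (u : Fin (n + 1)) : ¬F.Edge T u 0 := by
  rintro (⟨⟨-, h, -⟩, -⟩ | ⟨h, h'⟩)
  · exact h F.zero_mem
  · simp [hT.2.1 u h] at h'

lemma IsEW.exists_edge (hT : F.IsEW T) {v : Fin (n + 1)} (hv : v ≠ 0) : ∃ u, F.Edge T u v := by
  by_cases h : v ∈ F.rows
  · obtain ⟨j, hj⟩ := hT.2.2.1 v h hv
    exact ⟨j, Or.inr hj⟩
  · have hc : F.Cell 0 v := ⟨F.zero_mem, h, Fin.pos_of_ne_zero hv⟩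
    exact ⟨0, Or.inl ⟨hc, hT.2.1 v hc⟩⟩

/-- A set of vertices in which every vertex has a predecessor in the set is empty. -/
lemma IsEW.eq_empty_of_forall_exists_edge (hT : F.IsEW T) (W : Finset (Fin (n + 1)))
    (hW : ∀ v ∈ W, ∃ u ∈ W, F.Edge T u v) : W = ∅ := by
  induction W using Finset.strongInduction with
  | H W ih =>
    by_contra hne
    obtain ⟨v, hv⟩ := Finset.nonempty_iff_ne_empty.2 hne
    have hrow : (W.filter (· ∈ F.rows)).Nonempty := by
      by_cases h : v ∈ F.rows
      · exact ⟨v, by simp [hv, h]⟩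
      · obtain ⟨u, hu, e⟩ := hW v hv
        exact ⟨u, by simp [hu, e.mem_rows_iff, h]⟩
    obtain ⟨r, hr, hmin⟩ := Finset.exists_min_image _ id hrow
    simp only [Finset.mem_filter, id] at hr hmin
    have hcell : ∀ c ∈ W, c ∉ F.rows → F.Cell r c := by
      intro c hc hcr
      obtain ⟨u, hu, e⟩ := hW c hc
      have hur := e.mem_rows_iff.2 hcr
      have huc : u < c := by
        rcases e with ⟨h, -⟩ | ⟨h, -⟩
        · exact h.2.2
        · exact absurd h.1 hcr
      exact ⟨hr.2, hcr, (hmin u ⟨hu, hur⟩).trans_lt huc⟩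
    -- the columns preceding `r`, together with the rows preceding one of them
    let W' := W.filter fun x => (x ∉ F.rows ∧ T r x = false) ∨
      ∃ c ∈ W, T r c = false ∧ F.Cell x c ∧ T x c = true
    have hrW' : r ∉ W' := by
      simp only [W', Finset.mem_filter, not_and, not_or, not_exists]
      refine fun _ => ⟨fun h => absurd hr.2 h, ?_⟩
      rintro c - h - h'
      simp [h] at h'
    have hsub : W' ⊂ W :=
      (Finset.filter_subset _ _).ssubset_of_ne fun h => hrW' (h.symm.subset hr.1)
    have hempty := ih W' hsub (by
      intro x hx
      obtain ⟨hxW, ⟨hxr, hx0⟩ | ⟨c, hc, hc0, hxc, hx1⟩⟩ := Finset.mem_filter.1 hx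
      · obtain ⟨u, hu, e⟩ := hW x hxW
        have e' := e
        rcases e' with h | h
        · exact ⟨u, Finset.mem_filter.2 ⟨hu, Or.inr ⟨x, hxW, hx0, h⟩⟩, e⟩
        · exact absurd h.1.1 hxr
      · obtain ⟨u, hu, e⟩ := hW x hxW
        have e' := e
        rcases e' with h | h
        · exact absurd hxc.1 h.1.2.1
        · refine ⟨u, Finset.mem_filter.2 ⟨hu, Or.inl ⟨h.1.2.1, ?_⟩⟩, e⟩
          by_contra hru
          have := hT.2.2.2 r x c u (hcell c hc hxc.2.1) (hcell u hu h.1.2.1) hxc h.1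
          simp_all)
    obtain ⟨u, hu, e⟩ := hW r hr.1
    have hur : u ∉ F.rows := fun h => e.mem_rows_iff.1 h hr.2
    have : u ∈ W' := by
      rcases e with h | h
      · exact absurd h.1.1 hur
      · exact Finset.mem_filter.2 ⟨hu, Or.inl ⟨hur, h.2⟩⟩
    simp [hempty] at this

lemma IsEW.wellFounded_edge (hT : F.IsEW T) : WellFounded (F.Edge T) := by
  refine WellFounded.wellFounded_iff_has_min.2 fun s hs => ?_
  by_contra! h
  have := hT.eq_empty_of_forall_exists_edge s.toFinset (by simpa using h)
  simp at this
  simp [this] at hs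

lemma phiTC_eq_ncard_edge {v : Fin (n + 1)} (hv : v ≠ 0) :
    F.phiTC T v = {u | F.Edge T v u}.ncard := by
  unfold phiTC Edge
  rw [if_neg hv]
  split_ifs with h <;> congr 1 <;> ext u <;> simp [Cell, h]

lemma deg_eq_phiTC_add {v : Fin (n + 1)} (hv : v ≠ 0) :
    F.deg v = F.phiTC T v + {u | F.Edge T u v}.ncard := by
  rw [phiTC_eq_ncard_edge hv, deg, ← Set.ncard_union_eq]
  · congr 1
    ext u
    simp [adj_iff_edge (T := T)]
  · exact Set.disjoint_left.2 fun u hvu huv => Edge.asymm hvu huv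

/-- The vertices toppled before the `k`-th block of the canonical toppling. -/
def toppledBefore (F : Ferrers n) (c : Fin (n + 1) → ℕ) (k : ℕ) : Set (Fin (n + 1)) :=
  {v | ∃ m < k, v ∈ F.canonTop c m}

lemma toppledBefore_succ (c : Fin (n + 1) → ℕ) (k : ℕ) :
    F.toppledBefore c (k + 1) = F.toppledBefore c k ∪ F.canonTop c k := by
  ext v
  simp only [toppledBefore, Nat.lt_succ_iff_lt_or_eq, Set.mem_ofPred_eq, Set.mem_union]
  grind

lemma mem_canonTop_succ {c : Fin (n + 1) → ℕ} {k : ℕ} {v : Fin (n + 1)} :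
    v ∈ F.canonTop c (k + 1) ↔ v ≠ 0 ∧ (v ∈ F.rows ↔ (k + 1) % 2 = 0) ∧
      F.deg v ≤ F.canonConfig c (k + 1) v := by
  simp only [canonTop, canonConfig, canonAux, Set.mem_ofPred_eq]
  rcases Nat.mod_two_eq_zero_or_one k with h | h <;> simp [h, Nat.add_mod]

/-- The state of the canonical toppling of `φ_TC(T)` just before the `k`-th block: the heights
account for all earlier topplings, the toppled vertices are closed under predecessors, and the
`k`-th block consists of vertices not yet toppled whose predecessors all are. -/
structure ToppleInvariant (F : Ferrers n) (T : Fin (n + 1) → Fin (n + 1) → Bool) (k : ℕ) :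
    Prop where
  config : ∀ v, v ≠ 0 → F.canonConfig (F.phiTC T) k v +
      (if v ∈ F.toppledBefore (F.phiTC T) k then F.deg v else 0) =
    F.phiTC T v + {w ∈ F.toppledBefore (F.phiTC T) k | F.Adj w v}.ncard
  closed : ∀ u v, F.Edge T u v → v ∈ F.toppledBefore (F.phiTC T) k →
    u ∈ F.toppledBefore (F.phiTC T) k
  fresh : ∀ v ∈ F.canonTop (F.phiTC T) k, v ∉ F.toppledBefore (F.phiTC T) k
  pred : ∀ v ∈ F.canonTop (F.phiTC T) k, ∀ u, F.Edge T u v →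
    u ∈ F.toppledBefore (F.phiTC T) k
  unstable : ∀ v ∈ F.canonTop (F.phiTC T) k, v ≠ 0 →
    F.deg v ≤ F.canonConfig (F.phiTC T) k v

/-- A non-sink vertex is unstable exactly if it has not been toppled but all its predecessors
have. -/
lemma IsEW.unstable_iff (hT : F.IsEW T) {D : Set (Fin (n + 1))} {v : Fin (n + 1)} {x : ℕ}
    (hv : v ≠ 0) (hD : ∀ u v, F.Edge T u v → v ∈ D → u ∈ D)
    (hx : x + (if v ∈ D then F.deg v else 0) = F.phiTC T v + {w ∈ D | F.Adj w v}.ncard) :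
    F.deg v ≤ x ↔ v ∉ D ∧ ∀ u, F.Edge T u v → u ∈ D := by
  have hdeg := deg_eq_phiTC_add (F := F) (T := T) hv
  by_cases hvD : v ∈ D
  · rw [if_pos hvD] at hx
    have h1 : {w ∈ D | F.Adj w v}.ncard ≤ F.deg v :=
      Set.ncard_le_ncard fun w hw => adj_comm.1 hw.2
    have h2 : 0 < {u | F.Edge T u v}.ncard := (Set.ncard_pos).2 (hT.exists_edge hv)
    simp only [hvD, not_true, false_and, iff_false]
    omega
  · rw [if_neg hvD] at hx
    have hset : {w ∈ D | F.Adj w v} = {u | F.Edge T u v} ∩ D := by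
      ext w
      simp only [adj_iff_edge (T := T), Set.mem_ofPred_eq, Set.mem_inter_iff]
      exact ⟨fun h => ⟨h.2.resolve_right fun e => hvD (hD _ _ e h.1), h.1⟩,
        fun h => ⟨h.2, Or.inl h.1⟩⟩
    rw [hset] at hx
    simp only [hvD, not_false_eq_true, true_and]
    constructor
    · intro h u hu
      have := Set.eq_of_subset_of_ncard_le
        (Set.inter_subset_left : {u | F.Edge T u v} ∩ D ⊆ {u | F.Edge T u v}) (by omega)
      exact (this.symm ▸ hu : u ∈ {u | F.Edge T u v} ∩ D).2
    · intro h
      rw [Set.inter_eq_left.2 (show {u | F.Edge T u v} ⊆ D from h)] at hx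
      omega

lemma IsEW.toppleInvariant (hT : F.IsEW T) (k : ℕ) : F.ToppleInvariant T k := by
  induction k with
  | zero =>
    refine ⟨?_, ?_, ?_, ?_, ?_⟩
    · simp [toppledBefore, canonConfig, canonAux]
    · simp [toppledBefore]
    · simp [toppledBefore]
    · rintro v rfl u e
      exact absurd e (hT.not_edge_zero u)
    · rintro v rfl h
      exact absurd rfl h
  | succ k ih =>
    have hclosed : ∀ u v, F.Edge T u v → v ∈ F.toppledBefore (F.phiTC T) (k + 1) →
        u ∈ F.toppledBefore (F.phiTC T) (k + 1) := by
      intro u v e hv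
      rw [toppledBefore_succ] at hv ⊢
      exact Or.inl (hv.elim (ih.closed u v e) fun h => ih.pred v h u e)
    have hconfig : ∀ v, v ≠ 0 → F.canonConfig (F.phiTC T) (k + 1) v +
          (if v ∈ F.toppledBefore (F.phiTC T) (k + 1) then F.deg v else 0) =
        F.phiTC T v + {w ∈ F.toppledBefore (F.phiTC T) (k + 1) | F.Adj w v}.ncard := by
      intro v hv
      have hset : {w ∈ F.toppledBefore (F.phiTC T) (k + 1) | F.Adj w v} =
          {w ∈ F.toppledBefore (F.phiTC T) k | F.Adj w v} ∪
            {w ∈ F.canonTop (F.phiTC T) k | F.Adj w v} := by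
        ext w
        simp [toppledBefore_succ, or_and_right]
      have hstep : F.canonConfig (F.phiTC T) (k + 1) v = F.canonConfig (F.phiTC T) k v +
          {w ∈ F.canonTop (F.phiTC T) k | F.Adj w v}.ncard -
            if v ∈ F.canonTop (F.phiTC T) k then F.deg v else 0 := by
        simp only [canonConfig, canonTop, canonAux, toppleSet, if_neg hv]
        congr
      rw [hset, Set.ncard_union_eq
        (Set.disjoint_left.2 fun w h h' => ih.fresh w h'.1 h.1), hstep, toppledBefore_succ]
      have hc := ih.config v hv
      by_cases hvk : v ∈ F.canonTop (F.phiTC T) k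
      · have h1 := ih.fresh v hvk
        have h2 := ih.unstable v hvk hv
        simp only [Set.mem_union, hvk, h1, or_true, if_true, if_false] at hc ⊢
        omega
      · simp only [Set.mem_union, hvk, or_false, if_false] at hc ⊢
        omega
    have hunst : ∀ v ∈ F.canonTop (F.phiTC T) (k + 1), _ := fun v hv =>
      (hT.unstable_iff (mem_canonTop_succ.1 hv).1 hclosed
        (hconfig v (mem_canonTop_succ.1 hv).1)).1 (mem_canonTop_succ.1 hv).2.2
    exact ⟨hconfig, hclosed, fun v hv => (hunst v hv).1, fun v hv => (hunst v hv).2,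
      fun v hv _ => (mem_canonTop_succ.1 hv).2.2⟩

/-- A non-sink vertex is toppled as soon as all its predecessors are and its side's turn comes. -/
lemma IsEW.mem_canonTop_succ_iff (hT : F.IsEW T) {k : ℕ} {v : Fin (n + 1)} (hv : v ≠ 0) :
    v ∈ F.canonTop (F.phiTC T) (k + 1) ↔ (v ∈ F.rows ↔ (k + 1) % 2 = 0) ∧
      v ∉ F.toppledBefore (F.phiTC T) (k + 1) ∧
      ∀ u, F.Edge T u v → u ∈ F.toppledBefore (F.phiTC T) (k + 1) := by
  have h := hT.toppleInvariant (k + 1)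
  rw [mem_canonTop_succ, hT.unstable_iff hv h.closed (h.config v hv)]
  simp [hv]

lemma IsEW.exists_mem_canonTop (hT : F.IsEW T) (v : Fin (n + 1)) :
    ∃ k, v ∈ F.canonTop (F.phiTC T) k := by
  induction v using hT.wellFounded_edge.induction with
  | _ v ih =>
    by_cases hv : v = 0
    · exact ⟨0, hv⟩
    choose! f hf using ih
    obtain ⟨K, hK⟩ := (Set.finite_range f).bddAbove
    obtain ⟨k, hk, hpar⟩ : ∃ k, K ≤ k ∧ (v ∈ F.rows ↔ (k + 1) % 2 = 0) := by
      by_cases h : v ∈ F.rows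
      · exact ⟨2 * K + 1, by omega, by simp only [h, true_iff]; omega⟩
      · exact ⟨2 * K, by omega, by simp only [h, false_iff]; omega⟩
    by_cases hD : v ∈ F.toppledBefore (F.phiTC T) (k + 1)
    · obtain ⟨m, -, hm⟩ := hD
      exact ⟨m, hm⟩
    · refine ⟨k + 1, (hT.mem_canonTop_succ_iff hv).2 ⟨hpar, hD, fun u e => ?_⟩⟩
      have := hK (Set.mem_range_self u)
      exact ⟨f u, by omega, hf u e⟩

lemma IsEW.mem_canonTop_bIdx (hT : F.IsEW T) (v : Fin (n + 1)) :
    v ∈ F.canonTop (F.phiTC T) (F.bIdx (F.phiTC T) v) :=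
  Nat.sInf_mem (s := {k | v ∈ F.canonTop (F.phiTC T) k}) (hT.exists_mem_canonTop v)

lemma IsEW.bIdx_eq_of_mem (hT : F.IsEW T) {v : Fin (n + 1)} {k : ℕ}
    (h : v ∈ F.canonTop (F.phiTC T) k) : F.bIdx (F.phiTC T) v = k := by
  refine (Nat.sInf_le h : F.bIdx (F.phiTC T) v ≤ k).eq_of_not_lt fun hlt => ?_
  exact (hT.toppleInvariant k).fresh v h ⟨_, hlt, hT.mem_canonTop_bIdx v⟩

lemma IsEW.mem_toppledBefore_iff (hT : F.IsEW T) {v : Fin (n + 1)} {k : ℕ} :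
    v ∈ F.toppledBefore (F.phiTC T) k ↔ F.bIdx (F.phiTC T) v < k := by
  refine ⟨?_, fun h => ⟨_, h, hT.mem_canonTop_bIdx v⟩⟩
  rintro ⟨m, hm, h⟩
  exact (hT.bIdx_eq_of_mem h).trans_lt hm

lemma IsEW.bIdx_lt_of_edge (hT : F.IsEW T) {u v : Fin (n + 1)} (e : F.Edge T u v) :
    F.bIdx (F.phiTC T) u < F.bIdx (F.phiTC T) v :=
  hT.mem_toppledBefore_iff.1 ((hT.toppleInvariant _).pred v (hT.mem_canonTop_bIdx v) u e)

lemma IsEW.mem_rows_iff_bIdx_even (hT : F.IsEW T) (v : Fin (n + 1)) :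
    v ∈ F.rows ↔ F.bIdx (F.phiTC T) v % 2 = 0 := by
  have h := hT.mem_canonTop_bIdx v
  generalize F.bIdx (F.phiTC T) v = b at h
  cases b with
  | zero =>
    obtain rfl : v = 0 := h
    simp [F.zero_mem]
  | succ k => exact (mem_canonTop_succ.1 h).2.1

/-- Every non-sink vertex has a predecessor in the block immediately before its own. -/
lemma IsEW.exists_edge_bIdx_succ (hT : F.IsEW T) {v : Fin (n + 1)} (hv : v ≠ 0) :
    ∃ u, F.Edge T u v ∧ F.bIdx (F.phiTC T) u + 1 = F.bIdx (F.phiTC T) v := by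
  by_contra! hne
  have hpar := hT.mem_rows_iff_bIdx_even v
  have hgap : ∀ u, F.Edge T u v → F.bIdx (F.phiTC T) u + 3 ≤ F.bIdx (F.phiTC T) v := by
    intro u e
    have h1 := hne u e
    have h2 := hT.bIdx_lt_of_edge e
    have h3 := e.mem_rows_iff
    rw [hT.mem_rows_iff_bIdx_even, hpar] at h3
    omega
  obtain ⟨w, hw⟩ := hT.exists_edge hv
  obtain ⟨m, hm⟩ := Nat.exists_eq_add_of_le' (le_of_add_le_right (hgap w hw))
  have : v ∈ F.canonTop (F.phiTC T) (m + 1) := by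
    refine (hT.mem_canonTop_succ_iff hv).2 ⟨?_, ?_, fun u e => ?_⟩
    · rw [hpar]
      omega
    · rw [hT.mem_toppledBefore_iff]
      omega
    · have := hgap u e
      rw [hT.mem_toppledBefore_iff]
      omega
  have := hT.bIdx_eq_of_mem this
  omega

lemma IsEW.apply_eq_true_iff (hT : F.IsEW T) {i j : Fin (n + 1)} (h : F.Cell i j) :
    T i j = true ↔ F.bIdx (F.phiTC T) i < F.bIdx (F.phiTC T) j := by
  constructor
  · exact fun h1 => hT.bIdx_lt_of_edge (Or.inl ⟨h, h1⟩)
  · intro hlt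
    by_contra h0
    exact (hT.bIdx_lt_of_edge (Or.inr ⟨h, by simpa using h0⟩)).asymm hlt

/-- A tableau agrees with its supplementary tableau on the cells of the diagram. -/
lemma IsEW.suppS_eq (hT : F.IsEW T) {i j : Fin (n + 1)} (h : F.Cell i j) :
    F.suppS T i j = T i j := by
  rw [Bool.eq_iff_iff, hT.apply_eq_true_iff h]
  simp [suppS]

lemma suppS_eq_true_iff {i j : Fin (n + 1)} :
    F.suppS T i j = true ↔ F.bIdx (F.phiTC T) i < F.bIdx (F.phiTC T) j := by
  simp [suppS]

lemma suppS_eq_false_iff {i j : Fin (n + 1)} :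
    F.suppS T i j = false ↔ F.bIdx (F.phiTC T) j ≤ F.bIdx (F.phiTC T) i := by
  simp [suppS]

lemma IsEW.bIdx_zero (hT : F.IsEW T) : F.bIdx (F.phiTC T) 0 = 0 :=
  hT.bIdx_eq_of_mem (k := 0) rfl

/-- Two steps backwards: a vertex with block index at least `2` has a predecessor in the
preceding block, which in turn has one in the block before that. -/
lemma IsEW.exists_edge_edge (hT : F.IsEW T) {v : Fin (n + 1)}
    (h : 2 ≤ F.bIdx (F.phiTC T) v) :
    ∃ u w, F.Edge T u v ∧ F.Edge T w u ∧
      F.bIdx (F.phiTC T) u + 1 = F.bIdx (F.phiTC T) v ∧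
      F.bIdx (F.phiTC T) w + 2 = F.bIdx (F.phiTC T) v := by
  have hne : ∀ x, 0 < F.bIdx (F.phiTC T) x → x ≠ 0 := by
    rintro x hx rfl
    exact hx.ne' hT.bIdx_zero
  obtain ⟨u, e, hu⟩ := hT.exists_edge_bIdx_succ (hne v (by omega))
  obtain ⟨w, e', hw⟩ := hT.exists_edge_bIdx_succ (hne u (by omega))
  exact ⟨u, w, e, e', hu, by omega⟩

lemma Edge.cell_of_mem_rows {u v : Fin (n + 1)} (e : F.Edge T u v) (h : u ∈ F.rows) :
    F.Cell u v ∧ T u v = true :=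
  e.resolve_right fun h' => h'.1.2.1 h

lemma Edge.cell_of_notMem_rows {u v : Fin (n + 1)} (e : F.Edge T u v) (h : u ∉ F.rows) :
    F.Cell v u ∧ T v u = false :=
  e.resolve_left fun h' => h h'.1.1

end Ferrers

/-- **Corollary.** A cell entry `T_{jk}` is a cornersupport if and
only if there are a row `j' ≠ j` and a column `k' ≠ k` such that: when `T_{jk} = 0`,
the cells `(j', k')` and `(j, k')` belong to `F` with `T_{j'k'} = 1`, `T_{jk'} = 0`
and `S_{j'k} = 0`; and when `T_{jk} = 1`, the cells `(j', k')` and `(j', k)` belong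
to `F` with `T_{j'k'} = 0`, `T_{j'k} = 1` and `S_{jk'} = 1`. -/
theorem cornersupport_iff {n : ℕ} (F : Ferrers n)
    (T : Fin (n + 1) → Fin (n + 1) → Bool) (hT : F.IsEW T)
    (j k : Fin (n + 1)) (hcell : F.Cell j k) :
    F.Cornersupport T j k ↔
      ∃ j' k' : Fin (n + 1), j' ∈ F.rows ∧ k' ∉ F.rows ∧ j' ≠ j ∧ k' ≠ k ∧
        ((T j k = false ∧ F.Cell j' k' ∧ F.Cell j k' ∧
            T j' k' = true ∧ T j k' = false ∧ F.suppS T j' k = false) ∨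
         (T j k = true ∧ F.Cell j' k' ∧ F.Cell j' k ∧
            T j' k' = false ∧ T j' k = true ∧ F.suppS T j k' = true)) := by
  have hpar := hT.mem_rows_iff_bIdx_even
  have hjpar := (hpar j).1 hcell.1
  have hkpar := (hpar k).not.1 hcell.2.1
  constructor
  · rintro ⟨j', k', hj', hk', -, -, h1, h2, h3⟩
    have hj'par := (hpar j').1 hj'
    have hk'par := (hpar k').not.1 hk'
    cases hx : T j k
    · simp only [hx, Bool.not_false, Ferrers.suppS_eq_true_iff,
        Ferrers.suppS_eq_false_iff] at h1 h2 h3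
      obtain ⟨c, r, e, e', hc, hr⟩ := hT.exists_edge_edge (v := j) (by omega)
      have hcr : c ∉ F.rows := fun h => e.mem_rows_iff.1 h hcell.1
      have hrr : r ∈ F.rows := e'.mem_rows_iff.2 hcr
      have hjc := e.cell_of_notMem_rows hcr
      have hrc := e'.cell_of_mem_rows hrr
      refine ⟨r, c, hrr, hcr, ?_, ?_, Or.inl ⟨rfl, hrc.1, hjc.1, hrc.2, hjc.2, ?_⟩⟩
      · rintro rfl
        omega
      · rintro rfl
        omega
      · rw [Ferrers.suppS_eq_false_iff]
        omega
    · simp only [hx, Bool.not_true, Ferrers.suppS_eq_true_iff,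
        Ferrers.suppS_eq_false_iff] at h1 h2 h3
      obtain ⟨r, c, e, e', hr, hc⟩ := hT.exists_edge_edge (v := k) (by omega)
      have hrr : r ∈ F.rows := e.mem_rows_iff.2 hcell.2.1
      have hcr : c ∉ F.rows := fun h => e'.mem_rows_iff.1 h hrr
      have hrk := e.cell_of_mem_rows hrr
      have hrc := e'.cell_of_notMem_rows hcr
      refine ⟨r, c, hrr, hcr, ?_, ?_, Or.inr ⟨rfl, hrc.1, hrk.1, hrc.2, hrk.2, ?_⟩⟩
      · rintro rfl
        omega
      · rintro rfl
        omega
      · rw [Ferrers.suppS_eq_true_iff]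
        omega
  · rintro ⟨j', k', hj', hk', hjj, hkk, ⟨h, c1, c2, h1, h2, h3⟩ | ⟨h, c1, c2, h1, h2, h3⟩⟩
    · exact ⟨j', k', hj', hk', hjj, hkk, by simp [hT.suppS_eq c1, h, h1], by rw [h3, h],
        by rw [hT.suppS_eq c2, h, h2]⟩
    · exact ⟨j', k', hj', hk', hjj, hkk, by simp [hT.suppS_eq c1, h, h1],
        by rw [hT.suppS_eq c2, h, h2], by rw [h3, h]⟩
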